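/- Let n > 1 and let K, L ⊆ ℝⁿ be nonempty closed convex sets whose cross covariogram g = g_{K,L} satisfies 0 < g(a) < ∞ for some a ∈ ℝⁿ. Let w ≠ 0 be a vector such that both w and −w lie in K + (−L). If g(0)^{1/n} = ½ (g(−w)^{1/n} + g(w)^{1/n}) > 0, then there exist v ∈ ℝⁿ and λ ∈ [−1,1] such that, for all t ∈ [−1,1], (1 + tλ)(K ∩ L) = (K − tv) ∩ (L + t(w − v)). -/

import Mathlib

open MeasureTheory Set Pointwise

open scoped ENNReal ProbabilityTheory

/-!
The slices `X = K ∩ (L + w)` and `Y = K ∩ (L - w)` satisfy `X + Y ⊆ 2 (K ∩ L)`, so the hypothesis on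
the covariogram is equality in the Brunn–Minkowski inequality for `X` and `Y`: they are translates,
by `v` and `-v`, of `(1 + λ) (K ∩ L)` and `(1 - λ) (K ∩ L)`. The sets
`D t = (K - t v) ∩ (L + t (w - v))` form a concave family, in which convexity gives
`(1 + t λ) D 0 ⊆ D t` from `D 0` and `D 1`, and, by Rådström cancellation, `D t ⊆ (1 + t λ) D 0`
from `D 0` and `D (-1)`.

The equality case of Brunn–Minkowski is read off from the Prékopa–Leindler inequality. If `A₀`, `A₁`
and `M ⊇ p A₀ + q A₁` have the same volume, the one-dimensional marginals of their uniform
distributions still satisfy Prékopa–Leindler. Hence the quantile functions obey `Q = p Q₀ + q Q₁`,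
and testing with the exponential gives equality in Hölder's inequality, which makes `Q₁ - Q₀`
constant: corresponding marginals are translates of each other, and a measure is determined by its
one-dimensional marginals.
-/

/-! ### The Prékopa–Leindler inequality -/

theorem volume_add_volume_le_volume_add {A B : Set ℝ} (hA : IsCompact A) (hB : IsCompact B)
    (hAne : A.Nonempty) (hBne : B.Nonempty) : volume A + volume B ≤ volume (A + B) := by
  have hsub : (sInf B +ᵥ A) ∪ (sSup A +ᵥ B) ⊆ A + B := by
    rintro _ (⟨y, hy, rfl⟩ | ⟨y, hy, rfl⟩)
    · exact ⟨y, hy, sInf B, hB.sInf_mem hBne, add_comm _ _⟩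
    · exact ⟨sSup A, hA.sSup_mem hAne, y, hy, rfl⟩
  have hdisj : AEDisjoint volume (sInf B +ᵥ A) (sSup A +ᵥ B) := by
    refine measure_mono_null (t := {sSup A + sInf B}) ?_ Real.volume_singleton
    rintro _ ⟨⟨y, hy, rfl⟩, ⟨z, hz, hzy⟩⟩
    have hyA : y ≤ sSup A := le_csSup hA.bddAbove hy
    have hzB : sInf B ≤ z := csInf_le hB.bddBelow hz
    simp only [vadd_eq_add, mem_singleton_iff] at hzy ⊢
    linarith
  calc volume A + volume B = volume (sInf B +ᵥ A) + volume (sSup A +ᵥ B) := by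
        rw [measure_vadd, measure_vadd]
    _ = volume ((sInf B +ᵥ A) ∪ (sSup A +ᵥ B)) :=
        (measure_union₀ (hB.vadd _).measurableSet.nullMeasurableSet hdisj).symm
    _ ≤ volume (A + B) := measure_mono hsub

theorem ofReal_mul_volume_add_le {p q : ℝ} (hp : 0 ≤ p) (hq : 0 ≤ q) {A B : Set ℝ}
    (hA : MeasurableSet A) (hB : MeasurableSet B) (hAne : A.Nonempty) (hBne : B.Nonempty) :
    ENNReal.ofReal p * volume A + ENNReal.ofReal q * volume B ≤ volume (p • A + q • B) := by
  obtain ⟨a, ha⟩ := hAne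
  obtain ⟨b, hb⟩ := hBne
  have hcompact : ∀ S, S ⊆ A ∧ IsCompact S → ∀ T, T ⊆ B ∧ IsCompact T →
      ENNReal.ofReal p * volume S + ENNReal.ofReal q * volume T ≤ volume (p • A + q • B) := by
    intro S ⟨hSA, hS⟩ T ⟨hTB, hT⟩
    calc ENNReal.ofReal p * volume S + ENNReal.ofReal q * volume T
        ≤ ENNReal.ofReal p * volume (insert a S) + ENNReal.ofReal q * volume (insert b T) := by
          gcongr <;> exact subset_insert _ _
      _ = volume (p • insert a S) + volume (q • insert b T) := by
          simp only [Measure.addHaar_smul_of_nonneg, hp, hq, Module.finrank_self, pow_one]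
      _ ≤ volume (p • insert a S + q • insert b T) :=
          volume_add_volume_le_volume_add ((hS.insert a).smul p) ((hT.insert b).smul q)
            (insert_nonempty a S).smul_set (insert_nonempty b T).smul_set
      _ ≤ volume (p • A + q • B) := by
          gcongr
          exacts [insert_subset ha hSA, insert_subset hb hTB]
  rw [hA.measure_eq_iSup_isCompact, hB.measure_eq_iSup_isCompact]
  simp only [ENNReal.mul_iSup, iSup_and']
  exact ENNReal.biSup_add_biSup_le' ⟨∅, empty_subset _, isCompact_empty⟩
    ⟨∅, empty_subset _, isCompact_empty⟩ hcompact

theorem lintegral_eq_lintegral_measure_ofReal_lt {α : Type*} [MeasurableSpace α] (μ : Measure α)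
    {f : α → ℝ≥0∞} (hf : AEMeasurable f μ) (hf_top : ∀ x, f x ≠ ∞) :
    ∫⁻ x, f x ∂μ = ∫⁻ r in Ioi (0 : ℝ), μ {x | ENNReal.ofReal r < f x} := by
  have hcake := lintegral_eq_lintegral_meas_lt μ (.of_forall fun _ => ENNReal.toReal_nonneg)
    hf.ennreal_toReal
  simp only [ENNReal.ofReal_toReal (hf_top _)] at hcake
  rw [hcake]
  refine setLIntegral_congr_fun measurableSet_Ioi fun r (hr : 0 < r) => ?_
  simp only [ENNReal.ofReal_lt_iff_lt_toReal hr.le (hf_top _)]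

theorem ennreal_geom_mean_le_arith_mean2 {p q : ℝ} (hp : 0 < p) (hq : 0 < q) (hpq : p + q = 1)
    (a b : ℝ≥0∞) : a ^ p * b ^ q ≤ ENNReal.ofReal p * a + ENNReal.ofReal q * b := by
  have hconj : (p⁻¹).HolderConjugate q⁻¹ :=
    Real.holderConjugate_iff.2 ⟨(one_lt_inv₀ hp).2 (by linarith), by simpa using hpq⟩
  simpa [← ENNReal.rpow_mul, hp.ne', hq.ne', ENNReal.ofReal_inv_of_pos, hp, hq, div_eq_mul_inv,
    mul_comm] using ENNReal.young_inequality (a ^ p) (b ^ q) hconj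

theorem ennreal_rpow_mul_rpow_self {p q : ℝ} (hp : 0 ≤ p) (hq : 0 ≤ q) (hpq : p + q = 1)
    (a : ℝ≥0∞) : a ^ p * a ^ q = a := by
  rw [← ENNReal.rpow_add_of_nonneg _ _ hp hq, hpq, ENNReal.rpow_one]

/-- Superlevel sets of `f`, `g` and `h` at a common level are related by the one-dimensional
Brunn–Minkowski inequality, which needs them nonempty: hence the normalisation of the suprema. -/
theorem lintegral_add_lintegral_le_of_iSup_eq_one {p q : ℝ} (hp : 0 < p) (hq : 0 < q)
    (hpq : p + q = 1) {f g h : ℝ → ℝ≥0∞} (hf : Measurable f) (hg : Measurable g)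
    (hh : Measurable h) (hf1 : ⨆ x, f x = 1) (hg1 : ⨆ x, g x = 1)
    (hfgh : ∀ x y, f x ^ p * g y ^ q ≤ h (p * x + q * y)) :
    ENNReal.ofReal p * (∫⁻ x, f x) + ENNReal.ofReal q * ∫⁻ x, g x ≤ ∫⁻ x, h x := by
  have hf_le : ∀ x, f x ≤ 1 := fun x => hf1 ▸ le_iSup f x
  have hg_le : ∀ x, g x ≤ 1 := fun x => hg1 ▸ le_iSup g x
  have hanti : ∀ u : ℝ → ℝ≥0∞, Measurable fun r => volume {x | ENNReal.ofReal r < u x} := fun u =>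
    Antitone.measurable fun r s hrs => measure_mono fun x (hx : _ < _) =>
      (ENNReal.ofReal_le_ofReal hrs).trans_lt hx
  calc ENNReal.ofReal p * (∫⁻ x, f x) + ENNReal.ofReal q * ∫⁻ x, g x
      = ∫⁻ r in Ioi (0 : ℝ), (ENNReal.ofReal p * volume {x | ENNReal.ofReal r < f x} +
          ENNReal.ofReal q * volume {x | ENNReal.ofReal r < g x}) := by
        rw [lintegral_eq_lintegral_measure_ofReal_lt _ hf.aemeasurable
            fun x => ne_top_of_le_ne_top ENNReal.one_ne_top (hf_le x),
          lintegral_eq_lintegral_measure_ofReal_lt _ hg.aemeasurable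
            fun x => ne_top_of_le_ne_top ENNReal.one_ne_top (hg_le x),
          lintegral_add_left ((hanti f).const_mul _), lintegral_const_mul _ (hanti f),
          lintegral_const_mul _ (hanti g)]
    _ ≤ ∫⁻ r in Ioi (0 : ℝ), volume {x | ENNReal.ofReal r < min (h x) 1} := by
        refine setLIntegral_mono (hanti _) fun r _ => ?_
        rcases lt_or_ge (ENNReal.ofReal r) 1 with hr | hr
        · refine (ofReal_mul_volume_add_le hp.le hq.le (measurableSet_lt measurable_const hf)
            (measurableSet_lt measurable_const hg) (lt_iSup_iff.1 (hr.trans_eq hf1.symm))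
            (lt_iSup_iff.1 (hr.trans_eq hg1.symm))).trans (measure_mono ?_)
          rintro _ ⟨_, ⟨x, hx, rfl⟩, _, ⟨y, hy, rfl⟩, rfl⟩
          refine lt_min (lt_of_lt_of_le ?_ (hfgh x y)) hr
          rw [← ennreal_rpow_mul_rpow_self hp.le hq.le hpq (ENNReal.ofReal r)]
          exact ENNReal.mul_lt_mul (ENNReal.rpow_lt_rpow hx hp) (ENNReal.rpow_lt_rpow hy hq)
        · simp [((hf_le _).trans hr).not_gt, ((hg_le _).trans hr).not_gt]
    _ = ∫⁻ x, min (h x) 1 := by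
        rw [lintegral_eq_lintegral_measure_ofReal_lt _ (hh.min measurable_const).aemeasurable
          fun x => ne_top_of_le_ne_top ENNReal.one_ne_top (min_le_right _ _)]
    _ ≤ ∫⁻ x, h x := lintegral_mono fun x => min_le_left _ _

theorem lintegral_rpow_mul_lintegral_rpow_le_of_iSup_ne_top {p q : ℝ} (hp : 0 < p) (hq : 0 < q)
    (hpq : p + q = 1) {f g h : ℝ → ℝ≥0∞} (hf : Measurable f) (hg : Measurable g)
    (hh : Measurable h) (hf_top : ⨆ x, f x ≠ ∞) (hg_top : ⨆ x, g x ≠ ∞)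
    (hfgh : ∀ x y, f x ^ p * g y ^ q ≤ h (p * x + q * y)) :
    (∫⁻ x, f x) ^ p * (∫⁻ x, g x) ^ q ≤ ∫⁻ x, h x := by
  set a := ⨆ x, f x with ha
  set b := ⨆ x, g x with hb
  rcases eq_or_ne a 0 with ha0 | ha0
  · simp [ENNReal.iSup_eq_zero.1 ha0, hp]
  rcases eq_or_ne b 0 with hb0 | hb0
  · simp [ENNReal.iSup_eq_zero.1 hb0, hq]
  have hap : a ^ p ≠ 0 ∧ a ^ p ≠ ∞ := by simp [ha0, hf_top, hp.not_gt]
  have hbq : b ^ q ≠ 0 ∧ b ^ q ≠ ∞ := by simp [hb0, hg_top, hq.not_gt]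
  have hdiv : ∀ x y : ℝ≥0∞, (x / a) ^ p * (y / b) ^ q = x ^ p * y ^ q / (a ^ p * b ^ q) :=
    fun x y => by
      rw [ENNReal.div_rpow_of_nonneg _ _ hp.le, ENNReal.div_rpow_of_nonneg _ _ hq.le,
        ENNReal.mul_div_mul_comm (.inr hbq.2) (.inl hap.2)]
  have hnormalized : ENNReal.ofReal p * ((∫⁻ x, f x) / a) + ENNReal.ofReal q * ((∫⁻ x, g x) / b) ≤
      (∫⁻ x, h x) / (a ^ p * b ^ q) := by
    simp only [div_eq_mul_inv, ← lintegral_mul_const _ hf, ← lintegral_mul_const _ hg,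
      ← lintegral_mul_const _ hh]
    refine lintegral_add_lintegral_le_of_iSup_eq_one hp hq hpq (hf.mul_const _) (hg.mul_const _)
      (hh.mul_const _) ?_ ?_ fun x y => ?_
    · rw [← ENNReal.iSup_mul, ← ha, ENNReal.mul_inv_cancel ha0 hf_top]
    · rw [← ENNReal.iSup_mul, ← hb, ENNReal.mul_inv_cancel hb0 hg_top]
    · simp only [← div_eq_mul_inv, hdiv]
      gcongr
      exact hfgh x y
  have hmean := (ennreal_geom_mean_le_arith_mean2 hp hq hpq _ _).trans hnormalized
  rwa [hdiv, div_eq_mul_inv, div_eq_mul_inv, ENNReal.mul_le_mul_iff_left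
    (ENNReal.inv_ne_zero.2 (ENNReal.mul_ne_top hap.2 hbq.2))
    (ENNReal.inv_ne_top.2 (mul_ne_zero hap.1 hbq.1))] at hmean

/-- The Prékopa–Leindler inequality with exponents `p` and `q` for a triple of measures on a real
vector space. Allowing three different measures makes the class stable under restriction to
subsets, which may change the three measures in different ways. -/
def IsPrekopaLeindler {E : Type*} [AddCommGroup E] [Module ℝ E] [MeasurableSpace E] (p q : ℝ)
    (μ₀ μ₁ μ : Measure E) : Prop :=
  ∀ ⦃f g h : E → ℝ≥0∞⦄, Measurable f → Measurable g → Measurable h →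
    (∀ x y, f x ^ p * g y ^ q ≤ h (p • x + q • y)) →
      (∫⁻ x, f x ∂μ₀) ^ p * (∫⁻ x, g x ∂μ₁) ^ q ≤ ∫⁻ x, h x ∂μ

namespace IsPrekopaLeindler

theorem volume_real {p q : ℝ} (hp : 0 < p) (hq : 0 < q) (hpq : p + q = 1) :
    IsPrekopaLeindler p q (volume : Measure ℝ) volume volume := by
  intro f g h hf hg hh hfgh
  have htrunc : ∀ u : ℝ → ℝ≥0∞, Measurable u →
      ∫⁻ x, u x = ⨆ N : ℕ, ∫⁻ x, min (u x) N := fun u hu => by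
    rw [← lintegral_iSup (fun N => hu.min measurable_const)
      (fun N M hNM x => min_le_min_left _ (Nat.cast_le.2 hNM))]
    simp only [← inf_iSup_eq, ENNReal.iSup_natCast, inf_top_eq]
  rw [htrunc f hf, htrunc g hg, ← ENNReal.orderIsoRpow_apply p hp,
    ← ENNReal.orderIsoRpow_apply q hq, OrderIso.map_iSup, OrderIso.map_iSup]
  simp only [ENNReal.iSup_mul, ENNReal.mul_iSup, iSup_le_iff, ENNReal.orderIsoRpow_apply]
  intro M N
  calc (∫⁻ x, min (f x) N) ^ p * (∫⁻ x, min (g x) M) ^ q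
      ≤ (∫⁻ x, min (f x) (max N M : ℕ)) ^ p * (∫⁻ x, min (g x) (max N M : ℕ)) ^ q := by
        gcongr
        exacts [le_max_left N M, le_max_right N M]
    _ ≤ ∫⁻ x, h x :=
        lintegral_rpow_mul_lintegral_rpow_le_of_iSup_ne_top hp hq hpq (hf.min measurable_const)
          (hg.min measurable_const) hh
          (ne_top_of_le_ne_top (ENNReal.natCast_ne_top _) (iSup_le fun x => min_le_right _ _))
          (ne_top_of_le_ne_top (ENNReal.natCast_ne_top _) (iSup_le fun x => min_le_right _ _))
          fun x y => le_trans (by gcongr <;> exact min_le_left _ _) (hfgh x y)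

section Constructions

variable {E F : Type*} [AddCommGroup E] [Module ℝ E] [MeasurableSpace E] [AddCommGroup F]
  [Module ℝ F] [MeasurableSpace F] {p q : ℝ} {μ₀ μ₁ μ : Measure E} {ν₀ ν₁ ν : Measure F}

theorem prod [SFinite ν₀] [SFinite ν₁] [SFinite ν] (hμ : IsPrekopaLeindler p q μ₀ μ₁ μ)
    (hν : IsPrekopaLeindler p q ν₀ ν₁ ν) :
    IsPrekopaLeindler p q (μ₀.prod ν₀) (μ₁.prod ν₁) (μ.prod ν) := by
  intro f g h hf hg hh hfgh
  rw [lintegral_prod _ hf.aemeasurable, lintegral_prod _ hg.aemeasurable,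
    lintegral_prod _ hh.aemeasurable]
  exact hμ hf.lintegral_prod_right' hg.lintegral_prod_right' hh.lintegral_prod_right'
    fun x y => hν (hf.comp measurable_prodMk_left) (hg.comp measurable_prodMk_left)
      (hh.comp measurable_prodMk_left) fun z w => hfgh (x, z) (y, w)

theorem map (hμ : IsPrekopaLeindler p q μ₀ μ₁ μ) {e : E →ₗ[ℝ] F} (he : Measurable e) :
    IsPrekopaLeindler p q (μ₀.map e) (μ₁.map e) (μ.map e) := by
  intro f g h hf hg hh hfgh
  rw [lintegral_map hf he, lintegral_map hg he, lintegral_map hh he]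
  exact hμ (hf.comp he) (hg.comp he) (hh.comp he) fun x y => by simpa using hfgh (e x) (e y)

theorem smul (hμ : IsPrekopaLeindler p q μ₀ μ₁ μ) (hp : 0 ≤ p) (hq : 0 ≤ q) (c₀ c₁ : ℝ≥0∞) :
    IsPrekopaLeindler p q (c₀ • μ₀) (c₁ • μ₁) ((c₀ ^ p * c₁ ^ q) • μ) := by
  intro f g h hf hg hh hfgh
  simp only [lintegral_smul_measure, smul_eq_mul, ENNReal.mul_rpow_of_nonneg _ _ hp,
    ENNReal.mul_rpow_of_nonneg _ _ hq]
  rw [mul_mul_mul_comm]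
  gcongr
  exact hμ hf hg hh hfgh

theorem restrict (hμ : IsPrekopaLeindler p q μ₀ μ₁ μ) (hp : 0 < p) (hq : 0 < q) {A₀ A₁ M : Set E}
    (hA₀ : MeasurableSet A₀) (hA₁ : MeasurableSet A₁) (hM : MeasurableSet M)
    (hsub : p • A₀ + q • A₁ ⊆ M) :
    IsPrekopaLeindler p q (μ₀.restrict A₀) (μ₁.restrict A₁) (μ.restrict M) := by
  intro f g h hf hg hh hfgh
  rw [← lintegral_indicator hA₀, ← lintegral_indicator hA₁, ← lintegral_indicator hM]
  refine hμ (hf.indicator hA₀) (hg.indicator hA₁) (hh.indicator hM) fun x y => ?_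
  by_cases hx : x ∈ A₀
  · by_cases hy : y ∈ A₁
    · have hxy : p • x + q • y ∈ M :=
        hsub (add_mem_add (smul_mem_smul_set hx) (smul_mem_smul_set hy))
      simpa only [indicator_of_mem, hx, hy, hxy] using hfgh x y
    · simp [hy, hq]
  · simp [hx, hp]

theorem measure_rpow_mul_le (hμ : IsPrekopaLeindler p q μ₀ μ₁ μ) (hp : 0 < p) (hq : 0 < q)
    {A₀ A₁ M : Set E} (hA₀ : MeasurableSet A₀) (hA₁ : MeasurableSet A₁) (hM : MeasurableSet M)
    (hsub : p • A₀ + q • A₁ ⊆ M) : μ₀ A₀ ^ p * μ₁ A₁ ^ q ≤ μ M := by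
  simpa using hμ.restrict hp hq hA₀ hA₁ hM hsub measurable_one measurable_one measurable_one
    (by simp)

theorem cond (hμ : IsPrekopaLeindler p q μ₀ μ₁ μ) (hp : 0 < p) (hq : 0 < q) (hpq : p + q = 1)
    {A₀ A₁ M : Set E} (hA₀ : MeasurableSet A₀) (hA₁ : MeasurableSet A₁) (hM : MeasurableSet M)
    (hsub : p • A₀ + q • A₁ ⊆ M) (h₀ : μ₀ A₀ = μ M) (h₁ : μ₁ A₁ = μ M) :
    IsPrekopaLeindler p q (ProbabilityTheory.cond μ₀ A₀) (ProbabilityTheory.cond μ₁ A₁)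
      (ProbabilityTheory.cond μ M) := by
  have hsmul := (hμ.restrict hp hq hA₀ hA₁ hM hsub).smul hp.le hq.le (μ M)⁻¹ (μ M)⁻¹
  rw [ennreal_rpow_mul_rpow_self hp.le hq.le hpq] at hsmul
  simpa only [ProbabilityTheory.cond, h₀, h₁] using hsmul

end Constructions

theorem volume_pi {p q : ℝ} (hp : 0 < p) (hq : 0 < q) (hpq : p + q = 1) (n : ℕ) :
    IsPrekopaLeindler p q (volume : Measure (Fin n → ℝ)) volume volume := by
  induction n with
  | zero =>
    intro f g h hf hg hh hfgh
    rw [Measure.volume_pi_eq_dirac 0, lintegral_dirac' _ hf, lintegral_dirac' _ hg,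
      lintegral_dirac' _ hh]
    simpa only [smul_zero, add_zero] using hfgh 0 0
  | succ n ih =>
    have hcons : ⇑(Fin.consLinearEquiv ℝ (fun _ : Fin (n + 1) => ℝ)).toLinearMap =
        (MeasurableEquiv.piFinSuccAbove (fun _ : Fin (n + 1) => ℝ) 0).symm :=
      funext fun x => (Fin.insertNth_zero' x.1 x.2).symm
    have hpres := (volume_preserving_piFinSuccAbove (fun _ : Fin (n + 1) => ℝ) 0).symm
    have hmap := ((volume_real hp hq hpq).prod ih).map (hcons ▸ hpres.measurable)
    rwa [hcons, ← Measure.volume_eq_prod, hpres.map_eq] at hmap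

theorem of_isAddHaarMeasure {E : Type*} [NormedAddCommGroup E] [NormedSpace ℝ E]
    [FiniteDimensional ℝ E] [MeasurableSpace E] [BorelSpace E] {p q : ℝ} (hp : 0 < p)
    (hq : 0 < q) (hpq : p + q = 1) (μ : Measure E) [μ.IsAddHaarMeasure] :
    IsPrekopaLeindler p q μ μ μ := by
  let e := (Module.finBasis ℝ E).equivFunL.symm
  have hmap := (volume_pi hp hq hpq (Module.finrank ℝ E)).map (e := e.toLinearMap)
    e.continuous.measurable
  have : (Measure.map e volume).IsAddHaarMeasure :=
    e.isAddHaarMeasure_map volume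
  have hsmul := hmap.smul hp.le hq.le (μ.addHaarScalarFactor (Measure.map e volume))
    (μ.addHaarScalarFactor (Measure.map e volume))
  rw [ennreal_rpow_mul_rpow_self hp.le hq.le hpq] at hsmul
  rw [Measure.isAddLeftInvariant_eq_smul μ (Measure.map e volume)]
  exact hsmul

end IsPrekopaLeindler

/-! ### Rigidity on the line -/

section HolderEquality

variable {α : Type*} [MeasurableSpace α] {μ : Measure α} {p q : ℝ} {f g : α → ℝ≥0∞}

theorem ae_eq_of_one_le_lintegral_rpow_mul_rpow (hp : 0 < p) (hq : 0 < q) (hpq : p + q = 1)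
    (hf : AEMeasurable f μ) (hg : AEMeasurable g μ) (hf1 : ∫⁻ x, f x ∂μ = 1)
    (hg1 : ∫⁻ x, g x ∂μ = 1) (hfg : 1 ≤ ∫⁻ x, f x ^ p * g x ^ q ∂μ) : f =ᵐ[μ] g := by
  have hmean : ∫⁻ x, (ENNReal.ofReal p * f x + ENNReal.ofReal q * g x) ∂μ = 1 := by
    rw [lintegral_add_left' (hf.const_mul _), lintegral_const_mul'' _ hf,
      lintegral_const_mul'' _ hg, hf1, hg1,
      mul_one, mul_one, ← ENNReal.ofReal_add hp.le hq.le, hpq, ENNReal.ofReal_one]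
  have hle : ∀ x, f x ^ p * g x ^ q ≤ ENNReal.ofReal p * f x + ENNReal.ofReal q * g x :=
    fun x => ennreal_geom_mean_le_arith_mean2 hp hq hpq _ _
  have heq : (fun x => f x ^ p * g x ^ q) =ᵐ[μ]
      fun x => ENNReal.ofReal p * f x + ENNReal.ofReal q * g x :=
    ae_eq_of_ae_le_of_lintegral_le (.of_forall hle)
      (ne_top_of_le_ne_top ENNReal.one_ne_top (hmean ▸ lintegral_mono hle))
      ((hf.const_mul _).add (hg.const_mul _)) (hmean.trans_le hfg)
  filter_upwards [heq, ae_lt_top' hf (hf1 ▸ ENNReal.one_ne_top),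
    ae_lt_top' hg (hg1 ▸ ENNReal.one_ne_top)] with x hx hfx hgx
  have hreal := congrArg ENNReal.toReal hx
  rw [ENNReal.toReal_mul, ← ENNReal.toReal_rpow, ← ENNReal.toReal_rpow, ENNReal.toReal_add
    (ENNReal.mul_ne_top ENNReal.ofReal_ne_top hfx.ne)
    (ENNReal.mul_ne_top ENNReal.ofReal_ne_top hgx.ne), ENNReal.toReal_mul, ENNReal.toReal_mul,
    ENNReal.toReal_ofReal hp.le, ENNReal.toReal_ofReal hq.le,
    Real.geom_mean_eq_arith_mean2_weighted_iff_of_pos hp hq ENNReal.toReal_nonneg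
      ENNReal.toReal_nonneg hpq] at hreal
  exact (ENNReal.toReal_eq_toReal_iff' hfx.ne hgx.ne).1 hreal

theorem ae_div_lintegral_eq_of_le_lintegral_rpow_mul_rpow (hp : 0 < p) (hq : 0 < q)
    (hpq : p + q = 1) (hf : AEMeasurable f μ) (hg : AEMeasurable g μ)
    (hf0 : ∫⁻ x, f x ∂μ ≠ 0) (hf_top : ∫⁻ x, f x ∂μ ≠ ∞) (hg0 : ∫⁻ x, g x ∂μ ≠ 0)
    (hg_top : ∫⁻ x, g x ∂μ ≠ ∞)
    (hfg : (∫⁻ x, f x ∂μ) ^ p * (∫⁻ x, g x ∂μ) ^ q ≤ ∫⁻ x, f x ^ p * g x ^ q ∂μ) :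
    ∀ᵐ x ∂μ, f x / (∫⁻ x, f x ∂μ) = g x / ∫⁻ x, g x ∂μ := by
  set a := ∫⁻ x, f x ∂μ
  set b := ∫⁻ x, g x ∂μ
  have hap : a ^ p ≠ 0 ∧ a ^ p ≠ ∞ := by simp [hf0, hf_top, hp.not_gt]
  have hbq : b ^ q ≠ 0 ∧ b ^ q ≠ ∞ := by simp [hg0, hg_top, hq.not_gt]
  refine ae_eq_of_one_le_lintegral_rpow_mul_rpow hp hq hpq (hf.div_const a) (hg.div_const b)
    ?_ ?_ ?_
  · simp only [div_eq_mul_inv]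
    rw [lintegral_mul_const'' _ hf, ENNReal.mul_inv_cancel hf0 hf_top]
  · simp only [div_eq_mul_inv]
    rw [lintegral_mul_const'' _ hg, ENNReal.mul_inv_cancel hg0 hg_top]
  · simp only [ENNReal.div_rpow_of_nonneg _ _ hp.le, ENNReal.div_rpow_of_nonneg _ _ hq.le,
      ← ENNReal.mul_div_mul_comm (.inr hbq.2) (.inl hap.2)]
    simp only [div_eq_mul_inv]
    rw [lintegral_mul_const'' (f := fun x => f x ^ p * g x ^ q) _
        ((hf.pow_const p).mul (hg.pow_const q)), ← div_eq_mul_inv,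
      ENNReal.le_div_iff_mul_le (.inl (mul_ne_zero hap.1 hbq.1))
        (.inl (ENNReal.mul_ne_top hap.2 hbq.2)), one_mul]
    exact hfg

end HolderEquality

theorem lintegral_ofReal_exp_ne_zero (μ : Measure ℝ) [NeZero μ] :
    ∫⁻ x, ENNReal.ofReal (Real.exp x) ∂μ ≠ 0 := by
  rw [Ne, lintegral_eq_zero_iff (by fun_prop)]
  simp [Filter.EventuallyEq, not_le.2 (Real.exp_pos _), NeZero.ne]

theorem ofReal_exp_rpow_mul_ofReal_exp_rpow (p q x y : ℝ) :
    ENNReal.ofReal (Real.exp x) ^ p * ENNReal.ofReal (Real.exp y) ^ q =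
      ENNReal.ofReal (Real.exp (p * x + q * y)) := by
  rw [ENNReal.ofReal_rpow_of_pos (Real.exp_pos _), ENNReal.ofReal_rpow_of_pos (Real.exp_pos _),
    ← ENNReal.ofReal_mul (Real.rpow_nonneg (Real.exp_nonneg _) _), ← Real.exp_mul,
    ← Real.exp_mul, ← Real.exp_add, mul_comm x, mul_comm y]

/-- `Q` is a quantile function of `μ`: on `(0, 1)` it is a right inverse of the cumulative
distribution function. It exists when `μ` has no atoms, and transports the uniform distribution
to `μ`. -/
def IsQuantile (μ : Measure ℝ) (Q : ℝ → ℝ) : Prop :=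
  ∀ τ ∈ Ioo (0 : ℝ) 1, ProbabilityTheory.cdf μ (Q τ) = τ

theorem exists_isQuantile (μ : Measure ℝ) [IsProbabilityMeasure μ] [NullSingletonClass μ] :
    ∃ Q, IsQuantile μ Q := by
  have hcont : Continuous (ProbabilityTheory.cdf μ) := by
    refine continuous_iff_continuousAt.2 fun a => ?_
    rw [(ProbabilityTheory.monotone_cdf μ).continuousAt_iff_leftLim_eq_rightLim,
      StieltjesFunction.rightLim_eq]
    refine le_antisymm ((ProbabilityTheory.monotone_cdf μ).leftLim_le le_rfl) ?_
    have hjump := (ProbabilityTheory.cdf μ).measure_singleton a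
    rwa [ProbabilityTheory.measure_cdf, measure_singleton, eq_comm, ENNReal.ofReal_eq_zero,
      sub_nonpos] at hjump
  have hsurj : ∀ τ ∈ Ioo (0 : ℝ) 1, ∃ s, ProbabilityTheory.cdf μ s = τ := fun τ hτ =>
    mem_range_of_exists_le_of_exists_ge hcont
      ((ProbabilityTheory.tendsto_cdf_atBot μ).eventually (ge_mem_nhds hτ.1)).exists
      ((ProbabilityTheory.tendsto_cdf_atTop μ).eventually (le_mem_nhds hτ.2)).exists
  choose! Q hQ using hsurj
  exact ⟨Q, hQ⟩

theorem measure_Ioi_eq_ofReal_one_sub_cdf (μ : Measure ℝ) [IsProbabilityMeasure μ] (x : ℝ) :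
    μ (Ioi x) = ENNReal.ofReal (1 - ProbabilityTheory.cdf μ x) := by
  rw [← compl_Iic, prob_compl_eq_one_sub measurableSet_Iic, ← ProbabilityTheory.ofReal_cdf,
    ENNReal.ofReal_sub _ (ProbabilityTheory.cdf_nonneg μ x), ENNReal.ofReal_one]

namespace IsQuantile

variable {μ : Measure ℝ} {Q : ℝ → ℝ}

theorem monotoneOn (hQ : IsQuantile μ Q) : MonotoneOn Q (Ioo 0 1) := by
  intro τ hτ σ hσ hle
  by_contra! hlt
  have hcdf := ProbabilityTheory.monotone_cdf μ hlt.le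
  rw [hQ τ hτ, hQ σ hσ] at hcdf
  exact hlt.ne' (congrArg Q (hle.antisymm hcdf))

theorem aemeasurable (hQ : IsQuantile μ Q) : AEMeasurable Q (volume.restrict (Ioo 0 1)) :=
  aemeasurable_restrict_of_monotoneOn measurableSet_Ioo hQ.monotoneOn

theorem map_eq [IsProbabilityMeasure μ] (hQ : IsQuantile μ Q) :
    (volume.restrict (Ioo 0 1)).map Q = μ := by
  have : IsFiniteMeasure ((volume.restrict (Ioo (0 : ℝ) 1)).map Q) := inferInstance
  refine Measure.ext_of_Iic _ _ fun a => ?_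
  rw [Measure.map_apply_of_aemeasurable hQ.aemeasurable measurableSet_Iic,
    Measure.restrict_apply' measurableSet_Ioo, ← ProbabilityTheory.ofReal_cdf]
  refine le_antisymm ?_ ?_
  · have hsub : Q ⁻¹' Iic a ∩ Ioo 0 1 ⊆ Ioc 0 (ProbabilityTheory.cdf μ a) := fun τ ⟨hτa, hτ⟩ =>
      ⟨hτ.1, (hQ τ hτ).symm.trans_le (ProbabilityTheory.monotone_cdf μ hτa)⟩
    simpa using measure_mono (μ := volume) hsub
  · have hsub : Ioo 0 (ProbabilityTheory.cdf μ a) ⊆ Q ⁻¹' Iic a ∩ Ioo 0 1 := fun τ hτ => by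
      have hτ1 : τ ∈ Ioo (0 : ℝ) 1 := ⟨hτ.1, hτ.2.trans_le (ProbabilityTheory.cdf_le_one μ a)⟩
      refine ⟨?_, hτ1⟩
      by_contra! hlt
      exact hτ.2.not_ge ((ProbabilityTheory.monotone_cdf μ (not_le.1 hlt).le).trans_eq (hQ τ hτ1))
    simpa using measure_mono (μ := volume) hsub

theorem lintegral_comp [IsProbabilityMeasure μ] (hQ : IsQuantile μ Q) {f : ℝ → ℝ≥0∞}
    (hf : Measurable f) : ∫⁻ τ in Ioo 0 1, f (Q τ) = ∫⁻ x, f x ∂μ := by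
  rw [← lintegral_map' hf.aemeasurable hQ.aemeasurable, hQ.map_eq]

end IsQuantile

namespace IsPrekopaLeindler

variable {p q : ℝ} {μ₀ μ₁ μ : Measure ℝ} [IsProbabilityMeasure μ₀] [IsProbabilityMeasure μ₁]
  [IsProbabilityMeasure μ]

theorem isQuantile (hμ : IsPrekopaLeindler p q μ₀ μ₁ μ) (hp : 0 < p) (hq : 0 < q)
    (hpq : p + q = 1) {Q₀ Q₁ : ℝ → ℝ} (hQ₀ : IsQuantile μ₀ Q₀) (hQ₁ : IsQuantile μ₁ Q₁) :
    IsQuantile μ fun τ => p * Q₀ τ + q * Q₁ τ := by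
  intro τ hτ
  have hlower := hμ.measure_rpow_mul_le hp hq (A₀ := Iic (Q₀ τ)) (A₁ := Iic (Q₁ τ))
    (M := Iic (p * Q₀ τ + q * Q₁ τ)) measurableSet_Iic measurableSet_Iic measurableSet_Iic <| by
      rintro _ ⟨_, ⟨x, hx : x ≤ _, rfl⟩, _, ⟨y, hy : y ≤ _, rfl⟩, rfl⟩
      simp only [smul_eq_mul, mem_Iic]
      gcongr
  have hupper := hμ.measure_rpow_mul_le hp hq (A₀ := Ioi (Q₀ τ)) (A₁ := Ioi (Q₁ τ))
    (M := Ioi (p * Q₀ τ + q * Q₁ τ)) measurableSet_Ioi measurableSet_Ioi measurableSet_Ioi <| by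
      rintro _ ⟨_, ⟨x, hx : _ < x, rfl⟩, _, ⟨y, hy : _ < y, rfl⟩, rfl⟩
      simp only [smul_eq_mul, mem_Ioi]
      gcongr
  simp only [← ProbabilityTheory.ofReal_cdf, hQ₀ τ hτ, hQ₁ τ hτ,
    ennreal_rpow_mul_rpow_self hp.le hq.le hpq,
    ENNReal.ofReal_le_ofReal_iff (ProbabilityTheory.cdf_nonneg _ _)] at hlower
  simp only [measure_Ioi_eq_ofReal_one_sub_cdf, hQ₀ τ hτ, hQ₁ τ hτ,
    ennreal_rpow_mul_rpow_self hp.le hq.le hpq,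
    ENNReal.ofReal_le_ofReal_iff (sub_nonneg.2 (ProbabilityTheory.cdf_le_one _ _))] at hupper
  linarith

/-- Testing the Prékopa–Leindler inequality with the exponential and transporting everything to
`(0, 1)` by quantiles gives equality in Hölder's inequality for `exp ∘ Q₀` and `exp ∘ Q₁`. -/
theorem exists_map_add_eq (hμ : IsPrekopaLeindler p q μ₀ μ₁ μ) (hp : 0 < p) (hq : 0 < q)
    (hpq : p + q = 1) [NullSingletonClass μ₀] [NullSingletonClass μ₁]
    (h₀ : ∫⁻ x, ENNReal.ofReal (Real.exp x) ∂μ₀ ≠ ∞)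
    (h₁ : ∫⁻ x, ENNReal.ofReal (Real.exp x) ∂μ₁ ≠ ∞) : ∃ d, μ₁ = μ₀.map (· + d) := by
  obtain ⟨Q₀, hQ₀⟩ := exists_isQuantile μ₀
  obtain ⟨Q₁, hQ₁⟩ := exists_isQuantile μ₁
  have hQ := hμ.isQuantile hp hq hpq hQ₀ hQ₁
  have hexp : Measurable fun x => ENNReal.ofReal (Real.exp x) := by fun_prop
  have hholder := hμ hexp hexp hexp fun x y => (ofReal_exp_rpow_mul_ofReal_exp_rpow p q x y).le
  have hratio := ae_div_lintegral_eq_of_le_lintegral_rpow_mul_rpow hp hq hpq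
    (hexp.comp_aemeasurable hQ₀.aemeasurable) (hexp.comp_aemeasurable hQ₁.aemeasurable)
  simp only [Function.comp_apply, ofReal_exp_rpow_mul_ofReal_exp_rpow, hQ₀.lintegral_comp hexp,
    hQ₁.lintegral_comp hexp, hQ.lintegral_comp hexp] at hratio
  have hne₀ := lintegral_ofReal_exp_ne_zero μ₀
  have hne₁ := lintegral_ofReal_exp_ne_zero μ₁
  set a := ∫⁻ x, ENNReal.ofReal (Real.exp x) ∂μ₀
  set b := ∫⁻ x, ENNReal.ofReal (Real.exp x) ∂μ₁
  have hshift : ∀ᵐ τ ∂volume.restrict (Ioo 0 1),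
      Q₁ τ = Q₀ τ + (Real.log b.toReal - Real.log a.toReal) := by
    filter_upwards [hratio hne₀ h₀ hne₁ h₁ hholder] with τ hτ
    have hlog := congrArg (fun x => Real.log x.toReal) hτ
    simp only [ENNReal.toReal_div, ENNReal.toReal_ofReal (Real.exp_nonneg _)] at hlog
    rw [Real.log_div (Real.exp_ne_zero _) (ENNReal.toReal_ne_zero.2 ⟨hne₀, h₀⟩),
      Real.log_div (Real.exp_ne_zero _) (ENNReal.toReal_ne_zero.2 ⟨hne₁, h₁⟩),
      Real.log_exp, Real.log_exp] at hlog
    linarith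
  refine ⟨Real.log b.toReal - Real.log a.toReal, ?_⟩
  rw [← hQ₁.map_eq, Measure.map_congr hshift, ← hQ₀.map_eq,
    AEMeasurable.map_map_of_aemeasurable (by fun_prop) hQ₀.aemeasurable]
  rfl

end IsPrekopaLeindler

/-! ### Convex bodies of equal volume -/

theorem eq_of_forall_map_strongDual_eq {E : Type*} [NormedAddCommGroup E] [NormedSpace ℝ E]
    [CompleteSpace E] [SecondCountableTopology E] [MeasurableSpace E] [BorelSpace E]
    {μ ν : Measure E} [IsFiniteMeasure μ] [IsFiniteMeasure ν]
    (h : ∀ l : StrongDual ℝ E, μ.map l = ν.map l) : μ = ν :=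
  Measure.ext_of_charFunDual <| funext fun l => by
    rw [charFunDual_eq_charFun_map_one, charFunDual_eq_charFun_map_one, h l]

theorem integrable_cond_of_isCompact {X F : Type*} [MeasurableSpace X] [TopologicalSpace X]
    [OpensMeasurableSpace X] [T2Space X] [NormedAddCommGroup F]
    {μ : Measure X} [IsFiniteMeasureOnCompacts μ] {A : Set X} (hA : IsCompact A) (hμA : μ A ≠ 0)
    {f : X → F} (hf : Continuous f) : Integrable f μ[|A] :=
  (hf.continuousOn.integrableOn_compact hA).smul_measure (ENNReal.inv_ne_top.2 hμA)

section ConvexHaar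

variable {E : Type*} [NormedAddCommGroup E] [NormedSpace ℝ E] [FiniteDimensional ℝ E]
  [MeasurableSpace E] [BorelSpace E] {μ : Measure E} [μ.IsAddHaarMeasure]

theorem interior_nonempty_of_convex_of_measure_ne_zero {A : Set E} (hA : Convex ℝ A)
    (hμA : μ A ≠ 0) : (interior A).Nonempty := by
  by_contra! hint
  refine hμA (measure_mono_null ?_ (hA.addHaar_frontier μ))
  simpa only [frontier, hint, sdiff_empty] using subset_closure

theorem subset_of_convex_of_measure_sdiff_eq_zero {A B : Set E} (hA : Convex ℝ A) (hμA : μ A ≠ 0)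
    (hB : IsClosed B) (hAB : μ (A \ B) = 0) : A ⊆ B := by
  intro x hxA
  by_contra hxB
  have hx : x ∈ closure (interior A) := by
    rw [hA.closure_interior_eq_closure_of_nonempty_interior
      (interior_nonempty_of_convex_of_measure_ne_zero hA hμA)]
    exact subset_closure hxA
  have hpos : 0 < μ (Bᶜ ∩ interior A) :=
    (hB.isOpen_compl.inter isOpen_interior).measure_pos μ
      (mem_closure_iff.1 hx Bᶜ hB.isOpen_compl hxB)
  have hsub : Bᶜ ∩ interior A ⊆ A \ B := fun y hy => ⟨interior_subset hy.2, hy.1⟩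
  exact hpos.ne' (measure_mono_null hsub hAB)

theorem nullSingletonClass_map_of_absolutelyContinuous {ν : Measure E} (hν : ν ≪ μ)
    {l : StrongDual ℝ E} (hl : l ≠ 0) : NullSingletonClass (ν.map l) := by
  refine ⟨fun s => ?_⟩
  obtain ⟨c, -, hc⟩ := l.toLinearMap.exists_map_addHaar_eq_smul_addHaar μ volume
    (LinearMap.surjective fun h => hl (ContinuousLinearMap.coe_injective h))
  have hnull : μ.map l {s} = 0 := by
    simpa using congrArg (fun ρ : Measure ℝ => ρ {s}) hc
  exact hν.map l.continuous.measurable hnull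

theorem subset_vadd_of_cond_eq_map {A B : Set E} (hA : Convex ℝ A) (hA_meas : MeasurableSet A)
    (hμA : μ A ≠ 0) (hμA_top : μ A ≠ ∞) (hB : IsClosed B) {c : E}
    (h : μ[|A] = μ[|B].map (· + c)) : A ⊆ c +ᵥ B := by
  refine subset_of_convex_of_measure_sdiff_eq_zero hA hμA (hB.vadd c) ?_
  have hB0 : μ[|B] ((· + c) ⁻¹' (c +ᵥ B)ᶜ) = 0 := by
    rw [show (· + c) ⁻¹' (c +ᵥ B)ᶜ = Bᶜ by
      ext x; simp [mem_vadd_set_iff_neg_vadd_mem, add_comm],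
      ProbabilityTheory.cond_apply hB.measurableSet, inter_compl_self, measure_empty, mul_zero]
  rw [← Measure.map_apply (measurable_add_const c) (hB.vadd c).measurableSet.compl, ← h,
    ProbabilityTheory.cond_apply hA_meas, mul_eq_zero, ← sdiff_eq] at hB0
  exact hB0.resolve_left (ENNReal.inv_ne_zero.2 hμA_top)

section EqualVolumes

variable {p q : ℝ} {A₀ A₁ M : Set E}

theorem exists_map_cond_eq_map_add (hp : 0 < p) (hq : 0 < q) (hpq : p + q = 1)
    (hA₀ : IsCompact A₀) (hA₁ : IsCompact A₁) (hM : MeasurableSet M) (hsub : p • A₀ + q • A₁ ⊆ M)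
    (h₀ : μ A₀ = μ M) (h₁ : μ A₁ = μ M) (hμM : μ M ≠ 0) {l : StrongDual ℝ E} (hl : l ≠ 0) :
    ∃ d, μ[|A₁].map l = (μ[|A₀].map l).map (· + d) := by
  have hprob : ∀ A, μ A = μ M → IsProbabilityMeasure (μ[|A].map l) := fun A hA =>
    have := ProbabilityTheory.cond_isProbabilityMeasure_of_finite (hA ▸ hμM)
      (hA ▸ h₀ ▸ hA₀.measure_lt_top.ne)
    Measure.isProbabilityMeasure_map l.continuous.aemeasurable
  have hexp : ∀ A, IsCompact A → μ A = μ M →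
      ∫⁻ x, ENNReal.ofReal (Real.exp x) ∂μ[|A].map l ≠ ∞ := fun A hA hAM => by
    rw [lintegral_map (by fun_prop) l.continuous.measurable]
    exact (integrable_cond_of_isCompact hA (hAM ▸ hμM)
      (Real.continuous_exp.comp l.continuous)).lintegral_lt_top.ne
  have := hprob A₀ h₀
  have := hprob A₁ h₁
  have := hprob M rfl
  have hatom : ∀ A, NullSingletonClass (μ[|A].map l) := fun A =>
    nullSingletonClass_map_of_absolutelyContinuous ProbabilityTheory.cond_absolutelyContinuous hl
  have := hatom A₀
  have := hatom A₁
  exact (((IsPrekopaLeindler.of_isAddHaarMeasure hp hq hpq μ).cond hp hq hpq hA₀.measurableSet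
    hA₁.measurableSet hM hsub h₀ h₁).map (e := l.toLinearMap)
      l.continuous.measurable).exists_map_add_eq hp hq hpq (hexp A₀ hA₀ h₀) (hexp A₁ hA₁ h₁)

/-- The one-dimensional marginals of the two uniform measures are translates of each other; the
translation is necessarily the difference of the barycentres, so it is linear in the functional. -/
theorem exists_cond_eq_map_add (hp : 0 < p) (hq : 0 < q) (hpq : p + q = 1)
    (hA₀ : IsCompact A₀) (hA₁ : IsCompact A₁) (hM : MeasurableSet M) (hsub : p • A₀ + q • A₁ ⊆ M)
    (h₀ : μ A₀ = μ M) (h₁ : μ A₁ = μ M) (hμM : μ M ≠ 0) :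
    ∃ c, μ[|A₁] = μ[|A₀].map (· + c) := by
  have hμM_top : μ M ≠ ∞ := h₀ ▸ hA₀.measure_lt_top.ne
  have := ProbabilityTheory.cond_isProbabilityMeasure_of_finite (h₀ ▸ hμM) (h₀ ▸ hμM_top)
  have := ProbabilityTheory.cond_isProbabilityMeasure_of_finite (h₁ ▸ hμM) (h₁ ▸ hμM_top)
  have hint₀ : Integrable (fun x : E => x) μ[|A₀] :=
    integrable_cond_of_isCompact hA₀ (h₀ ▸ hμM) continuous_id
  have hint₁ : Integrable (fun x : E => x) μ[|A₁] :=
    integrable_cond_of_isCompact hA₁ (h₁ ▸ hμM) continuous_id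
  set c : E := (∫ x, x ∂μ[|A₁]) - ∫ x, x ∂μ[|A₀] with hc
  refine ⟨c, eq_of_forall_map_strongDual_eq fun l => ?_⟩
  rw [Measure.map_map l.continuous.measurable (measurable_add_const c)]
  rcases eq_or_ne l 0 with rfl | hl
  · change μ[|A₁].map (fun _ => (0 : ℝ)) = μ[|A₀].map fun _ => (0 : ℝ)
    simp only [Measure.map_const, measure_univ]
  obtain ⟨d, hd⟩ := exists_map_cond_eq_map_add hp hq hpq hA₀ hA₁ hM hsub h₀ h₁ hμM hl
  rw [Measure.map_map (measurable_add_const d) l.continuous.measurable] at hd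
  have hmean : ∫ x, l x ∂μ[|A₁] = (∫ x, l x ∂μ[|A₀]) + d := by
    have hd_mean := congrArg (fun ρ : Measure ℝ => ∫ x, x ∂ρ) hd
    rw [integral_map (by fun_prop) (by fun_prop),
      integral_map (by fun_prop) (by fun_prop)] at hd_mean
    simpa [integral_add (l.integrable_comp hint₀) (integrable_const d)] using hd_mean
  have hlc : l c = d := by
    rw [hc, map_sub, ← l.integral_comp_comm hint₁, ← l.integral_comp_comm hint₀,
      hmean, add_sub_cancel_left]
  rw [hd, ← hlc]
  congr 1
  ext x
  simp

theorem exists_eq_vadd_of_measure_eq (hp : 0 < p) (hq : 0 < q) (hpq : p + q = 1)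
    (hA₀ : IsCompact A₀) (hA₁ : IsCompact A₁) (hconv₀ : Convex ℝ A₀) (hconv₁ : Convex ℝ A₁)
    (hM : MeasurableSet M) (hsub : p • A₀ + q • A₁ ⊆ M) (h₀ : μ A₀ = μ M) (h₁ : μ A₁ = μ M)
    (hμM : μ M ≠ 0) : ∃ c : E, A₁ = c +ᵥ A₀ := by
  obtain ⟨c, hc⟩ := exists_cond_eq_map_add hp hq hpq hA₀ hA₁ hM hsub h₀ h₁ hμM
  have hc' : μ[|A₀] = μ[|A₁].map (· + -c) := by
    rw [hc, Measure.map_map (by fun_prop) (by fun_prop)]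
    simp [Function.comp_def]
  refine ⟨c, (subset_vadd_of_cond_eq_map hconv₁ hA₁.measurableSet (h₁ ▸ hμM)
    hA₁.measure_lt_top.ne hA₀.isClosed hc).antisymm ?_⟩
  exact vadd_set_subset_iff_subset_neg_vadd_set.2 <| subset_vadd_of_cond_eq_map hconv₀
    hA₀.measurableSet (h₀ ▸ hμM) hA₀.measure_lt_top.ne hA₁.isClosed hc'

end EqualVolumes

end ConvexHaar

/-! ### Boundedness of convex sets of finite measure -/

section Boundedness

variable {E : Type*} [NormedAddCommGroup E] [NormedSpace ℝ E] {A : Set E} {x y : E} {r : ℝ}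

theorem ball_add_smul_sub_subset_of_convex (hA : Convex ℝ A) (hball : Metric.ball x r ⊆ A)
    (hy : y ∈ A) {s : ℝ} (hs₀ : 0 ≤ s) (hs₁ : s < 1) :
    Metric.ball (x + s • (y - x)) ((1 - s) * r) ⊆ A := by
  intro z hz
  have hs : 0 < 1 - s := sub_pos.2 hs₁
  set u := (1 - s)⁻¹ • (z - (x + s • (y - x))) with hu
  have hxu : x + u ∈ A := by
    refine hball ?_
    rw [mem_ball_iff_norm] at hz ⊢
    rwa [add_sub_cancel_left, norm_smul, Real.norm_of_nonneg (inv_nonneg.2 hs.le),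
      inv_mul_lt_iff₀ hs]
  have hz_eq : z = (1 - s) • (x + u) + s • y := by
    rw [smul_add, hu, smul_inv_smul₀ hs.ne']
    module
  exact hz_eq ▸ hA hxu hy hs.le hs₀ (sub_add_cancel 1 s)

/-- Along the first half of the segment from `x` to `y` one can place `N` disjoint balls of radius
`r / 2` inside `A`. -/
theorem natCast_mul_measure_ball_le_of_convex [MeasurableSpace E] [BorelSpace E] {μ : Measure E}
    [μ.IsAddHaarMeasure] (hA : Convex ℝ A) (hr : 0 ≤ r) (hball : Metric.ball x r ⊆ A)
    (hy : y ∈ A) {N : ℕ} (hN : 2 * N * r ≤ ‖y - x‖) :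
    N * μ (Metric.ball 0 (r / 2)) ≤ μ A := by
  rcases N.eq_zero_or_pos with rfl | hNpos
  · simp
  have : (0 : ℝ) < N := Nat.cast_pos.2 hNpos
  set center : ℕ → E := fun k => x + ((k : ℝ) / (2 * N)) • (y - x)
  have hdisj : (↑(Finset.range N) : Set ℕ).PairwiseDisjoint
      fun k => Metric.ball (center k) (r / 2) := by
    intro j _ k _ hjk
    refine Metric.ball_disjoint_ball ?_
    have hjk₁ : (1 : ℝ) ≤ |(j : ℝ) - k| := by
      have hjk_int : 1 ≤ |(j : ℤ) - k| := Int.one_le_abs (sub_ne_zero.2 (by exact_mod_cast hjk))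
      exact_mod_cast hjk_int
    rw [dist_eq_norm, add_sub_add_left_eq_sub, ← sub_smul, norm_smul, ← sub_div, norm_div,
      Real.norm_of_nonneg (by positivity : (0 : ℝ) ≤ 2 * N), add_halves,
      div_mul_eq_mul_div, le_div_iff₀ (by positivity), Real.norm_eq_abs, mul_comm r]
    exact hN.trans (le_mul_of_one_le_left (norm_nonneg _) hjk₁)
  have hsub : ∀ k ∈ Finset.range N, Metric.ball (center k) (r / 2) ⊆ A := by
    intro k hk
    have hkN : (k : ℝ) / (2 * N) ≤ 1 / 2 := by
      rw [div_le_div_iff₀ (by positivity) two_pos]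
      linarith [Nat.cast_le (α := ℝ) |>.2 (Finset.mem_range.1 hk).le]
    refine (Metric.ball_subset_ball ?_).trans
      (ball_add_smul_sub_subset_of_convex hA hball hy (by positivity) (hkN.trans_lt (by norm_num)))
    nlinarith
  calc N * μ (Metric.ball 0 (r / 2))
      = ∑ k ∈ Finset.range N, μ (Metric.ball (center k) (r / 2)) := by
        simp [Measure.addHaar_ball_center]
    _ = μ (⋃ k ∈ Finset.range N, Metric.ball (center k) (r / 2)) :=
        (measure_biUnion_finset hdisj fun _ _ => measurableSet_ball).symm
    _ ≤ μ A := measure_mono (iUnion₂_subset hsub)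

theorem isBounded_of_convex_of_measure_ne_top [FiniteDimensional ℝ E] [MeasurableSpace E]
    [BorelSpace E] {μ : Measure E} [μ.IsAddHaarMeasure] (hA : Convex ℝ A) (hμA : μ A ≠ 0)
    (hμA_top : μ A ≠ ∞) : Bornology.IsBounded A := by
  obtain ⟨x, hx⟩ := interior_nonempty_of_convex_of_measure_ne_zero hA hμA
  obtain ⟨r, hr, hball⟩ := Metric.isOpen_iff.1 isOpen_interior x hx
  obtain ⟨N, hN⟩ :=
    ENNReal.exists_nat_mul_gt (Metric.measure_ball_pos μ 0 (half_pos hr)).ne' hμA_top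
  refine (Metric.isBounded_ball (x := x) (r := 2 * N * r)).subset fun y hy => ?_
  rw [mem_ball_iff_norm]
  by_contra! hyx
  exact hN.not_ge
    (natCast_mul_measure_ball_le_of_convex hA hr.le (hball.trans interior_subset) hy hyx)

end Boundedness

/-! ### Homothetic equality in the Brunn–Minkowski inequality -/

section LocallyConvex

variable {E : Type*} [AddCommGroup E] [Module ℝ E] [TopologicalSpace E]
  [IsTopologicalAddGroup E] [ContinuousSMul ℝ E] [LocallyConvexSpace ℝ E]

theorem subset_of_add_subset_add {A B C : Set E} (hA : IsCompact A) (hA_ne : A.Nonempty)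
    (hC : Convex ℝ C) (hC_closed : IsClosed C) (h : B + A ⊆ C + A) : B ⊆ C := by
  intro b hb
  by_contra hbC
  obtain ⟨l, u, hlC, hlb⟩ := geometric_hahn_banach_closed_point hC hC_closed hbC
  obtain ⟨a, ha, hmax⟩ := hA.exists_isMaxOn hA_ne l.continuous.continuousOn
  obtain ⟨c, hc, a', ha', hsum⟩ := h (add_mem_add hb ha)
  have hl_sum : l c + l a' = l b + l a := by simpa using congrArg l hsum
  have hl_max : l a' ≤ l a := hmax ha'
  linarith [hlC c hc]

theorem eq_smul_of_convex_family_of_nonneg [T2Space E] {D : ℝ → Set E}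
    (hD : Convex ℝ {x : ℝ × E | x.2 ∈ D x.1})
    (hD_compact : IsCompact (D 0)) (hD_ne : (D 0).Nonempty) {l : ℝ}
    (hD_one : D 1 = (1 + l) • D 0) (hD_neg_one : D (-1) = (1 - l) • D 0) {t : ℝ}
    (ht : t ∈ Icc (0 : ℝ) 1) : D t = (1 + t * l) • D 0 := by
  have hD_zero : Convex ℝ (D 0) := hD.linear_preimage (LinearMap.inr ℝ ℝ E)
  have hmix : ∀ {s s' a b : ℝ}, 0 ≤ a → 0 ≤ b → a + b = 1 → ∀ {z z'}, z ∈ D s → z' ∈ D s' →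
      a • z + b • z' ∈ D (a * s + b * s') := fun ha hb hab z z' hz hz' =>
    hD (x := (_, z)) (y := (_, z')) hz hz' ha hb hab
  refine Subset.antisymm (subset_of_add_subset_add (hD_compact.smul (t * (1 - l)))
    hD_ne.smul_set (hD_zero.smul _) (hD_compact.smul _).isClosed ?_) ?_
  · rintro _ ⟨z, hz, _, ⟨a, ha, rfl⟩, rfl⟩
    have ht₁ : 0 < 1 + t := by linarith [ht.1]
    have ha' : (1 - l) • a ∈ D (-1) := hD_neg_one ▸ smul_mem_smul_set ha
    set m := (1 / (1 + t)) • z + (t / (1 + t)) • (1 - l) • a with hm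
    have hm_mem : m ∈ D 0 := by
      convert hmix (one_div_nonneg.2 ht₁.le) (div_nonneg ht.1 ht₁.le) (by field_simp) hz ha' using 2
      ring
    refine ⟨_, smul_mem_smul_set hm_mem, _, smul_mem_smul_set hm_mem, ?_⟩
    calc (1 + t * l) • m + (t * (1 - l)) • m = (1 + t) • m := by module
      _ = z + (t * (1 - l)) • a := by
        rw [hm]
        match_scalars <;> field_simp
  · rintro _ ⟨a, ha, rfl⟩
    have ha' : (1 + l) • a ∈ D 1 := hD_one ▸ smul_mem_smul_set ha
    convert hmix (sub_nonneg.2 ht.2) ht.1 (sub_add_cancel 1 t) ha ha' using 1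
    · ring_nf
    · module

theorem eq_smul_of_convex_family [T2Space E] {D : ℝ → Set E}
    (hD : Convex ℝ {x : ℝ × E | x.2 ∈ D x.1})
    (hD_compact : IsCompact (D 0)) (hD_ne : (D 0).Nonempty) {l : ℝ}
    (hD_one : D 1 = (1 + l) • D 0) (hD_neg_one : D (-1) = (1 - l) • D 0) {t : ℝ}
    (ht : t ∈ Icc (-1 : ℝ) 1) : D t = (1 + t * l) • D 0 := by
  rcases le_total 0 t with ht₀ | ht₀
  · exact eq_smul_of_convex_family_of_nonneg hD hD_compact hD_ne hD_one hD_neg_one ⟨ht₀, ht.2⟩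
  · have hD_reflect : Convex ℝ {x : ℝ × E | x.2 ∈ D (-x.1)} :=
      hD.linear_preimage ((-LinearMap.fst ℝ ℝ E).prod (LinearMap.snd ℝ ℝ E))
    have h := eq_smul_of_convex_family_of_nonneg (D := fun s => D (-s)) (l := -l) (t := -t)
      hD_reflect (by rwa [neg_zero]) (by rwa [neg_zero]) (by rwa [neg_zero, ← sub_eq_add_neg])
      (by rwa [neg_neg, neg_zero, sub_neg_eq_add]) ⟨neg_nonneg.2 ht₀, neg_le.1 ht.1⟩
    simpa only [neg_neg, neg_zero, neg_mul_neg] using h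

end LocallyConvex

theorem smul_set_vadd_set {R M : Type*} [AddMonoid M] [DistribSMul R M] (r : R) (v : M)
    (A : Set M) : r • (v +ᵥ A) = r • v +ᵥ r • A := by
  simp only [← image_smul, ← image_vadd, image_image, vadd_eq_add, smul_add]

section BrunnMinkowskiEquality

variable {E : Type*} [NormedAddCommGroup E] [NormedSpace ℝ E] [FiniteDimensional ℝ E]
  [MeasurableSpace E] [BorelSpace E] {μ : Measure E} [μ.IsAddHaarMeasure] {A X Y : Set E}

theorem eq_of_convex_of_subset_of_measure_le (hA : Convex ℝ A) (hμA : μ A ≠ 0)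
    (hX : IsCompact X) (hXA : X ⊆ A) (hμ : μ A ≤ μ X) : A = X := by
  refine (subset_of_convex_of_measure_sdiff_eq_zero hA hμA hX.isClosed ?_).antisymm hXA
  rw [measure_sdiff hXA hX.nullMeasurableSet hX.measure_lt_top.ne, tsub_eq_zero_of_le hμ]

theorem exists_eq_singleton_and_eq_vadd_of_add_subset (hX : X.Nonempty) (hY : IsCompact Y)
    (hA : Convex ℝ A) (hμA : μ A ≠ 0) (hsub : X + Y ⊆ A) (hμY : μ Y = μ A) :
    ∃ v : E, X = {v} ∧ Y = -v +ᵥ A := by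
  obtain ⟨v, hv⟩ := hX
  have hY_ne : Y.Nonempty := nonempty_of_measure_ne_zero (hμY ▸ hμA)
  have hAY : A = v +ᵥ Y :=
    eq_of_convex_of_subset_of_measure_le hA hμA (hY.vadd v) (by
      rw [← singleton_vadd]
      exact (add_subset_add_right (singleton_subset_iff.2 hv)).trans hsub)
      (by rw [measure_vadd, hμY])
  refine ⟨v, (subset_of_add_subset_add hY hY_ne (convex_singleton v) isClosed_singleton ?_).antisymm
    (singleton_subset_iff.2 hv), by rw [hAY, neg_vadd_vadd]⟩
  exact hsub.trans (hAY.trans singleton_vadd.symm).subset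

theorem measure_inv_smul_eq_of_measure_eq {r : ℝ} (hr : 0 < r)
    (hX : μ X = ENNReal.ofReal (r ^ Module.finrank ℝ E) * μ A) : μ (r⁻¹ • X) = μ A := by
  rw [← Measure.addHaar_smul_of_nonneg μ hr.le] at hX
  rw [Measure.addHaar_smul_of_nonneg μ (inv_nonneg.2 hr.le), hX,
    ← Measure.addHaar_smul_of_nonneg μ (inv_nonneg.2 hr.le), inv_smul_smul₀ hr.ne']

variable {α β : ℝ}

theorem exists_eq_vadd_smul_of_add_subset_of_pos (hα : 0 < α) (hβ : 0 < β)
    (hX : IsCompact X) (hY : IsCompact Y) (hX_conv : Convex ℝ X) (hY_conv : Convex ℝ Y)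
    (hA : Convex ℝ A) (hA_meas : MeasurableSet A) (hμA : μ A ≠ 0) (hsub : X + Y ⊆ (α + β) • A)
    (hμX : μ X = ENNReal.ofReal (α ^ Module.finrank ℝ E) * μ A)
    (hμY : μ Y = ENNReal.ofReal (β ^ Module.finrank ℝ E) * μ A) :
    ∃ v : E, X = v +ᵥ α • A ∧ Y = -v +ᵥ β • A := by
  have hαβ : 0 < α + β := add_pos hα hβ
  have hpq : α / (α + β) + β / (α + β) = 1 := by field_simp
  have hX_vol := measure_inv_smul_eq_of_measure_eq hα hμX
  have hY_vol := measure_inv_smul_eq_of_measure_eq hβ hμY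
  have hsub' : (α / (α + β)) • α⁻¹ • X + (β / (α + β)) • β⁻¹ • Y ⊆ A := by
    rw [smul_smul, smul_smul, div_mul_eq_mul_div, mul_inv_cancel₀ hα.ne', div_mul_eq_mul_div,
      mul_inv_cancel₀ hβ.ne', ← smul_add, one_div]
    simpa only [inv_smul_smul₀ hαβ.ne'] using smul_set_mono (a := (α + β)⁻¹) hsub
  obtain ⟨c, hc⟩ := exists_eq_vadd_of_measure_eq (div_pos hα hαβ) (div_pos hβ hαβ) hpq
    (hX.smul α⁻¹) (hY.smul β⁻¹) (hX_conv.smul _) (hY_conv.smul _) hA_meas hsub'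
    hX_vol hY_vol hμA
  set d := (β / (α + β)) • c with hd
  have hAX : A = d +ᵥ α⁻¹ • X := by
    refine eq_of_convex_of_subset_of_measure_le hA hμA ((hX.smul α⁻¹).vadd d) ?_
      (by rw [measure_vadd, hX_vol])
    rintro _ ⟨x, hx, rfl⟩
    convert hsub' (add_mem_add (smul_mem_smul_set hx)
      (smul_mem_smul_set (hc ▸ vadd_mem_vadd_set hx))) using 1
    simp only [vadd_eq_add, smul_add]
    rw [add_left_comm, ← add_smul, hpq, one_smul]
  have hX_eq : X = -(α • d) +ᵥ α • A := by
    rw [hAX, smul_set_vadd_set, neg_vadd_vadd, smul_inv_smul₀ hα.ne']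
  refine ⟨-(α • d), hX_eq, ?_⟩
  have hY_eq : Y = β • (c +ᵥ α⁻¹ • X) := by rw [← hc, smul_inv_smul₀ hβ.ne']
  rw [hY_eq, hAX, smul_set_vadd_set, smul_set_vadd_set, vadd_vadd, hd]
  congr 1
  match_scalars
  field_simp

theorem exists_eq_vadd_smul_of_add_subset (hα : 0 ≤ α) (hβ : 0 ≤ β) (hαβ : 0 < α + β)
    (hX : IsCompact X) (hY : IsCompact Y) (hX_conv : Convex ℝ X) (hY_conv : Convex ℝ Y)
    (hX_ne : X.Nonempty) (hY_ne : Y.Nonempty)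
    (hA : Convex ℝ A) (hA_meas : MeasurableSet A) (hμA : μ A ≠ 0) (hsub : X + Y ⊆ (α + β) • A)
    (hμX : μ X = ENNReal.ofReal (α ^ Module.finrank ℝ E) * μ A)
    (hμY : μ Y = ENNReal.ofReal (β ^ Module.finrank ℝ E) * μ A) :
    ∃ v : E, X = v +ᵥ α • A ∧ Y = -v +ᵥ β • A := by
  have hzero_smul : (0 : ℝ) • A = {0} := zero_smul_set (nonempty_of_measure_ne_zero hμA)
  have hμ_smul : ∀ {γ : ℝ}, 0 < γ →
      μ (γ • A) = ENNReal.ofReal (γ ^ Module.finrank ℝ E) * μ A ∧ μ (γ • A) ≠ 0 := by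
    intro γ hγ
    rw [Measure.addHaar_smul_of_nonneg μ hγ.le]
    exact ⟨rfl, mul_ne_zero (ENNReal.ofReal_pos.2 (pow_pos hγ _)).ne' hμA⟩
  rcases hα.eq_or_lt with rfl | hα
  · rw [zero_add] at hαβ hsub
    obtain ⟨v, hXv, hYv⟩ := exists_eq_singleton_and_eq_vadd_of_add_subset hX_ne hY (hA.smul β)
      (hμ_smul hαβ).2 hsub (hμY.trans (hμ_smul hαβ).1.symm)
    exact ⟨v, by rw [hXv, hzero_smul, vadd_set_singleton, vadd_eq_add, add_zero], hYv⟩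
  rcases hβ.eq_or_lt with rfl | hβ
  · rw [add_zero, add_comm] at hsub
    obtain ⟨v, hYv, hXv⟩ := exists_eq_singleton_and_eq_vadd_of_add_subset hY_ne hX (hA.smul α)
      (hμ_smul hα).2 hsub (hμX.trans (hμ_smul hα).1.symm)
    exact ⟨-v, hXv, by
      rw [hYv, hzero_smul, vadd_set_singleton, vadd_eq_add, neg_neg, add_zero]⟩
  exact exists_eq_vadd_smul_of_add_subset_of_pos hα hβ hX hY hX_conv hY_conv hA hA_meas hμA hsub
    hμX hμY

end BrunnMinkowskiEquality

/-! ### The cross covariogram -/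

section Slices

variable {E : Type*} [AddCommGroup E] {K L : Set E} {x : E}

theorem inter_vadd_nonempty_iff : (K ∩ (x +ᵥ L)).Nonempty ↔ x ∈ K + -L := by
  constructor
  · rintro ⟨_, hK, y, hy, rfl⟩
    exact ⟨_, hK, -y, by simpa using hy, by simp⟩
  · rintro ⟨y, hy, z, hz, rfl⟩
    exact ⟨y, hy, -z, hz, by simp⟩

theorem inter_vadd_add_inter_neg_vadd_subset [Module ℝ E] (hK : Convex ℝ K) (hL : Convex ℝ L) :
    (K ∩ (x +ᵥ L)) + (K ∩ (-x +ᵥ L)) ⊆ (2 : ℝ) • (K ∩ L) := by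
  rintro _ ⟨_, ⟨hyK, y, hy, rfl⟩, _, ⟨hzK, z, hz, rfl⟩, rfl⟩
  rw [mem_smul_set_iff_inv_smul_mem₀ two_ne_zero]
  constructor
  · convert hK hyK hzK (a := 2⁻¹) (b := 2⁻¹) (by positivity) (by positivity) (by norm_num) using 1
    rw [smul_add]
  · convert hL hy hz (a := 2⁻¹) (b := 2⁻¹) (by positivity) (by positivity) (by norm_num) using 1
    simp only [vadd_eq_add]
    module

theorem convex_setOf_snd_mem_smul_vadd [Module ℝ E] (hK : Convex ℝ K) (v : E) :
    Convex ℝ {x : ℝ × E | x.2 ∈ (x.1 • v) +ᵥ K} := by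
  simp only [mem_vadd_set_iff_neg_vadd_mem, vadd_eq_add]
  exact hK.linear_preimage (-(LinearMap.fst ℝ ℝ E).smulRight v + LinearMap.snd ℝ ℝ E)

theorem isCompact_of_add_subset_of_isCompact [TopologicalSpace E] [IsTopologicalAddGroup E]
    {X Y C : Set E} (hX : IsClosed X) (hY : Y.Nonempty) (hC : IsCompact C) (h : X + Y ⊆ C) :
    IsCompact X := by
  obtain ⟨y, hy⟩ := hY
  refine (hC.vadd (-y)).of_isClosed_subset hX fun x hx => ?_
  rw [mem_vadd_set_iff_neg_vadd_mem, neg_neg, vadd_eq_add, add_comm]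
  exact h (add_mem_add hx hy)

end Slices

theorem measure_eq_ofReal_rpow_div_pow_mul {X : Type*} [MeasurableSpace X] {μ : Measure X} {n : ℕ}
    (hn : n ≠ 0) {A B : Set X} (hA : μ A ≠ ∞) (hB : μ B ≠ ∞) (hB₀ : μ B ≠ 0) :
    μ A = ENNReal.ofReal ((μ.real A ^ (1 / n : ℝ) / μ.real B ^ (1 / n : ℝ)) ^ n) * μ B := by
  have hB_real : 0 < μ.real B := ENNReal.toReal_pos hB₀ hB
  rw [div_pow, one_div, Real.rpow_inv_natCast_pow measureReal_nonneg hn,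
    Real.rpow_inv_natCast_pow hB_real.le hn, ← ofReal_measureReal hB,
    ← ENNReal.ofReal_mul (by positivity), div_mul_cancel₀ _ hB_real.ne', ofReal_measureReal hA]

/-- The cross covariogram `g_{K,L}(x) = μ (K ∩ (L + x))`, with the junk value `0` where that measure
is infinite. -/
def crossCovariogram {E : Type*} [AddCommGroup E] [MeasurableSpace E] (μ : Measure E)
    (K L : Set E) (x : E) : ℝ :=
  μ.real (K ∩ (x +ᵥ L))

section CrossCovariogram

variable {E : Type*} [NormedAddCommGroup E] [NormedSpace ℝ E] [FiniteDimensional ℝ E]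
  [Nontrivial E] [MeasurableSpace E] [BorelSpace E] (μ : Measure E) [μ.IsAddHaarMeasure]
  {K L : Set E} {w : E}

theorem exists_inter_vadd_eq_vadd_smul_of_crossCovariogram (hK : Convex ℝ K) (hL : Convex ℝ L)
    (hKL : IsCompact (K ∩ L)) (hμKL : μ (K ∩ L) ≠ 0)
    (hX : IsCompact (K ∩ (w +ᵥ L))) (hY : IsCompact (K ∩ (-w +ᵥ L)))
    (hX_ne : (K ∩ (w +ᵥ L)).Nonempty) (hY_ne : (K ∩ (-w +ᵥ L)).Nonempty)
    (hmid : crossCovariogram μ K L 0 ^ (1 / (Module.finrank ℝ E : ℝ)) =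
      1 / 2 * (crossCovariogram μ K L (-w) ^ (1 / (Module.finrank ℝ E : ℝ)) +
        crossCovariogram μ K L w ^ (1 / (Module.finrank ℝ E : ℝ)))) :
    ∃ v : E, ∃ l ∈ Icc (-1 : ℝ) 1, K ∩ (w +ᵥ L) = v +ᵥ (1 + l) • (K ∩ L) ∧
      K ∩ (-w +ᵥ L) = -v +ᵥ (1 - l) • (K ∩ L) := by
  have hn : Module.finrank ℝ E ≠ 0 := Module.finrank_pos.ne'
  have hμKL_top := hKL.measure_lt_top (μ := μ) |>.ne
  have hα := measure_eq_ofReal_rpow_div_pow_mul hn (hX.measure_lt_top (μ := μ)).ne hμKL_top hμKL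
  have hβ := measure_eq_ofReal_rpow_div_pow_mul hn (hY.measure_lt_top (μ := μ)).ne hμKL_top hμKL
  simp only [crossCovariogram, zero_vadd] at hmid
  set e : ℝ := 1 / Module.finrank ℝ E
  have hKL_pos : 0 < μ.real (K ∩ L) ^ e := Real.rpow_pos_of_pos (ENNReal.toReal_pos hμKL hμKL_top) _
  set α := μ.real (K ∩ (w +ᵥ L)) ^ e / μ.real (K ∩ L) ^ e
  set β := μ.real (K ∩ (-w +ᵥ L)) ^ e / μ.real (K ∩ L) ^ e
  have hα₀ : 0 ≤ α := by positivity
  have hβ₀ : 0 ≤ β := by positivity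
  have hαβ : α + β = 2 := by
    rw [← add_div, div_eq_iff hKL_pos.ne']
    linarith
  obtain ⟨v, hXv, hYv⟩ := exists_eq_vadd_smul_of_add_subset hα₀ hβ₀ (hαβ ▸ two_pos) hX hY
    (hK.inter (hL.vadd w)) (hK.inter (hL.vadd (-w))) hX_ne hY_ne (hK.inter hL)
    hKL.measurableSet hμKL (hαβ ▸ inter_vadd_add_inter_neg_vadd_subset hK hL) hα hβ
  refine ⟨v, α - 1, ⟨by linarith, by linarith⟩, ?_, ?_⟩
  · rwa [add_sub_cancel]
  · rwa [show 1 - (α - 1) = β by linarith]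

theorem covariogram_affine_segment_consequence_general (hK : IsClosed K) (hK_conv : Convex ℝ K)
    (hL : IsClosed L) (hL_conv : Convex ℝ L) (hw : w ∈ K + -L) (hw' : -w ∈ K + -L)
    (hmid : crossCovariogram μ K L 0 ^ (1 / (Module.finrank ℝ E : ℝ)) =
      1 / 2 * (crossCovariogram μ K L (-w) ^ (1 / (Module.finrank ℝ E : ℝ)) +
        crossCovariogram μ K L w ^ (1 / (Module.finrank ℝ E : ℝ))))
    (hpos : 0 < crossCovariogram μ K L 0 ^ (1 / (Module.finrank ℝ E : ℝ))) :
    ∃ v : E, ∃ l : ℝ, l ∈ Icc (-1 : ℝ) 1 ∧ ∀ t ∈ Icc (-1 : ℝ) 1,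
      (1 + t * l) • (K ∩ L) = ((-(t • v)) +ᵥ K) ∩ ((t • (w - v)) +ᵥ L) := by
  have hKL_conv := hK_conv.inter hL_conv
  have hn : (1 / Module.finrank ℝ E : ℝ) ≠ 0 :=
    one_div_ne_zero (Nat.cast_ne_zero.2 Module.finrank_pos.ne')
  have hreal : μ.real (K ∩ L) ≠ 0 := fun h => by
    simp only [crossCovariogram, zero_vadd, h, Real.zero_rpow hn, lt_self_iff_false] at hpos
  have hμKL := ENNReal.toReal_ne_zero.1 hreal
  have hKL : IsCompact (K ∩ L) := Metric.isCompact_of_isClosed_isBounded (hK.inter hL)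
    (isBounded_of_convex_of_measure_ne_top hKL_conv hμKL.1 hμKL.2)
  have hX_ne := inter_vadd_nonempty_iff.2 hw
  have hY_ne := inter_vadd_nonempty_iff.2 hw'
  have hsum := inter_vadd_add_inter_neg_vadd_subset (x := w) hK_conv hL_conv
  have hX := isCompact_of_add_subset_of_isCompact (hK.inter (hL.vadd w)) hY_ne (hKL.smul _) hsum
  have hY := isCompact_of_add_subset_of_isCompact (hK.inter (hL.vadd (-w))) hX_ne (hKL.smul _)
    (add_comm (K ∩ (w +ᵥ L)) _ ▸ hsum)
  obtain ⟨v, l, hl, hXv, hYv⟩ := exists_inter_vadd_eq_vadd_smul_of_crossCovariogram μ hK_conv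
    hL_conv hKL hμKL.1 hX hY hX_ne hY_ne hmid
  refine ⟨v, l, hl, fun t ht => ?_⟩
  have hD : Convex ℝ {x : ℝ × E | x.2 ∈ ((x.1 • -v) +ᵥ K) ∩ ((x.1 • (w - v)) +ᵥ L)} :=
    (convex_setOf_snd_mem_smul_vadd hK_conv _).inter (convex_setOf_snd_mem_smul_vadd hL_conv _)
  have h := eq_smul_of_convex_family (D := fun t => ((t • -v) +ᵥ K) ∩ ((t • (w - v)) +ᵥ L)) hD
    (by simpa using hKL) (by simpa using nonempty_of_measure_ne_zero hμKL.1) (l := l)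
    (by simpa [vadd_set_inter, vadd_vadd, sub_eq_add_neg, add_comm] using congrArg (-v +ᵥ ·) hXv)
    (by simpa [vadd_set_inter, vadd_vadd, sub_eq_add_neg, add_comm] using congrArg (v +ᵥ ·) hYv) ht
  simpa [eq_comm] using h

end CrossCovariogram

/-- Lemma 2.3 (Consequences of the equality conditions): if the `1/n`-th power of the cross
covariogram is affine on the segment from `-w` to `w` with positive midpoint value, then
there exist `v` and `λ ∈ [-1,1]` such that
`(1 + tλ)(K ∩ L) = (K - tv) ∩ (L + t(w - v))` for all `t ∈ [-1,1]`. -/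
theorem covariogram_affine_segment_consequence
    (n : ℕ) (hn : 1 < n)
    (K L : Set (EuclideanSpace ℝ (Fin n)))
    (hKne : K.Nonempty) (hKclosed : IsClosed K) (hKconv : Convex ℝ K)
    (hLne : L.Nonempty) (hLclosed : IsClosed L) (hLconv : Convex ℝ L)
    (g : EuclideanSpace ℝ (Fin n) → ℝ)
    (hg : ∀ x, g x = (volume (K ∩ (x +ᵥ L))).toReal)
    (a : EuclideanSpace ℝ (Fin n))
    (hpos : 0 < volume (K ∩ (a +ᵥ L)))
    (hfin : volume (K ∩ (a +ᵥ L)) < ⊤)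
    (w : EuclideanSpace ℝ (Fin n)) (hw : w ≠ 0)
    (hwsupp : w ∈ K + -L) (hwsupp' : -w ∈ K + -L)
    (hmid : g 0 ^ (1 / (n : ℝ))
      = (1 / 2) * (g (-w) ^ (1 / (n : ℝ)) + g w ^ (1 / (n : ℝ))))
    (hmidpos : 0 < g 0 ^ (1 / (n : ℝ))) :
    ∃ v : EuclideanSpace ℝ (Fin n), ∃ l : ℝ, l ∈ Icc (-1 : ℝ) 1 ∧
      ∀ t ∈ Icc (-1 : ℝ) 1,
        (1 + t * l) • (K ∩ L) = ((-(t • v)) +ᵥ K) ∩ ((t • (w - v)) +ᵥ L) := by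
  have : Nontrivial (EuclideanSpace ℝ (Fin n)) := nontrivial_of_ne w 0 hw
  obtain rfl : g = crossCovariogram volume K L := funext hg
  exact covariogram_affine_segment_consequence_general volume hKclosed hKconv hLclosed hLconv
    hwsupp hwsupp' (by simpa using hmid) (by simpa using hmidpos)
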